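/- Let B(K) be the space of pairs of degree-≤4 bivariate polynomials vanishing on the boundary of a nondegenerate triangle K. Then the divergence map div : B(K) → P^3, v ↦ ∂v1/∂x + ∂v2/∂y, is injective, and its image has dimension 6 equal to dim B(K). -/

import Mathlib

/-!
Write `ell P Q` for the linear form vanishing on the line `PQ`, and `β` (`bub`) for the product of
the three edge forms.  A polynomial vanishing on an open segment `PQ` is divisible by `ell P Q`
(`ell_dvd`); since each edge form has no zero on the other two open edges, this can be applied
three times, so a component of a field in `B(K)` is `β * r`, and the degree bound forces
`deg r ≤ 1` (`bubble_of_memB`).  Hence `B(K)` consists of the fields `β * w` with `w` affine.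

If `div (β * w) = 0`, restricting to the edge `PQ`, where only the derivative of `ell P Q` survives,
shows that `∇(ell P Q) · w` vanishes on the open edge (`edge_normal`), hence, being affine, at
both its endpoints.  At each vertex the normals of the two adjacent edges are independent, so `w`
vanishes at the three vertices, and an affine field with this property is zero (`core`).
-/

/-- Evaluation of a bivariate polynomial at a point of `ℝ × ℝ`. -/
noncomputable def evP (q : MvPolynomial (Fin 2) ℝ) (p : ℝ × ℝ) : ℝ :=
  MvPolynomial.eval ![p.1, p.2] q

/-- The divergence of a pair of bivariate polynomials. -/
noncomputable def divP (v : MvPolynomial (Fin 2) ℝ × MvPolynomial (Fin 2) ℝ) :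
    MvPolynomial (Fin 2) ℝ :=
  MvPolynomial.pderiv 0 v.1 + MvPolynomial.pderiv 1 v.2

/-- Membership in B(K): both components of degree ≤ 4 and vanishing on ∂K. -/
noncomputable def memB (A B C : ℝ × ℝ)
    (v : MvPolynomial (Fin 2) ℝ × MvPolynomial (Fin 2) ℝ) : Prop :=
  v.1.totalDegree ≤ 4 ∧ v.2.totalDegree ≤ 4 ∧
    ∀ p ∈ segment ℝ A B ∪ segment ℝ B C ∪ segment ℝ C A,
      evP v.1 p = 0 ∧ evP v.2 p = 0

open MvPolynomial

/-! ### Edge forms and the bubble -/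

/-- Twice the signed area of the triangle `P Q R`. -/
def area (P Q R : ℝ × ℝ) : ℝ :=
  (Q.1 - P.1) * (R.2 - P.2) - (Q.2 - P.2) * (R.1 - P.1)

/-- The linear form vanishing on the line `P Q`, scaled so that its value at `R` is
`area P Q R`. -/
noncomputable def ell (P Q : ℝ × ℝ) : MvPolynomial (Fin 2) ℝ :=
  C (Q.1 - P.1) * (X 1 - C P.2) - C (Q.2 - P.2) * (X 0 - C P.1)

/-- The affine polynomial `a + b x + c y`. -/
noncomputable def aff (a b c : ℝ) : MvPolynomial (Fin 2) ℝ :=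
  C a + C b * X 0 + C c * X 1

/-- The cubic bubble function, up to a scalar: the product of the three edge forms. -/
noncomputable def bub (A B C : ℝ × ℝ) : MvPolynomial (Fin 2) ℝ :=
  ell A B * (ell B C * ell C A)

lemma evP_ell (P Q R : ℝ × ℝ) : evP (ell P Q) R = area P Q R := by
  simp [evP, ell, area]

lemma evP_aff (a b c : ℝ) (p : ℝ × ℝ) : evP (aff a b c) p = a + b * p.1 + c * p.2 := by
  simp [evP, aff]

lemma evP_mul (f g : MvPolynomial (Fin 2) ℝ) (p : ℝ × ℝ) :
    evP (f * g) p = evP f p * evP g p := by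
  simp [evP]

/-! ### Divisibility by an edge form -/

/-- The point of parameter `t` on the line from `P` to `Q`. -/
def pt (P Q : ℝ × ℝ) (t : ℝ) : ℝ × ℝ := (P.1 + t * (Q.1 - P.1), P.2 + t * (Q.2 - P.2))

lemma pt_mem (P Q : ℝ × ℝ) {t : ℝ} (h0 : 0 ≤ t) (h1 : t ≤ 1) : pt P Q t ∈ segment ℝ P Q := by
  refine ⟨1 - t, t, by linarith, h0, by ring, ?_⟩
  ext <;> simp [pt] <;> ring

lemma exists_pt {P Q p : ℝ × ℝ} (h : p ∈ segment ℝ P Q) : ∃ t, p = pt P Q t := by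
  obtain ⟨a, b, _, _, hab, rfl⟩ := h
  obtain rfl : a = 1 - b := by linarith
  refine ⟨b, ?_⟩
  ext <;> simp [pt] <;> ring

/-- A polynomial vanishing on an open segment vanishes on the whole line. -/
lemma vanish_line {P Q : ℝ × ℝ} {q : MvPolynomial (Fin 2) ℝ}
    (h : ∀ t : ℝ, 0 < t → t < 1 → evP q (pt P Q t) = 0) (t : ℝ) : evP q (pt P Q t) = 0 := by
  -- the restriction of `q` to the line, as a polynomial in the parameter
  let f : Polynomial ℝ := aeval ![Polynomial.C P.1 + Polynomial.X * Polynomial.C (Q.1 - P.1),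
    Polynomial.C P.2 + Polynomial.X * Polynomial.C (Q.2 - P.2)] q
  have hf : ∀ s, f.eval s = evP q (pt P Q s) := by
    intro s
    have : (Polynomial.aeval s).comp (aeval
        ![Polynomial.C P.1 + Polynomial.X * Polynomial.C (Q.1 - P.1),
          Polynomial.C P.2 + Polynomial.X * Polynomial.C (Q.2 - P.2)]) =
        (aeval ![(pt P Q s).1, (pt P Q s).2] : MvPolynomial (Fin 2) ℝ →ₐ[ℝ] ℝ) := by
      ext i
      fin_cases i <;> simp [pt]
    have h2 := DFunLike.congr_fun this q
    simpa [f, evP, Polynomial.coe_aeval_eq_eval, MvPolynomial.coe_aeval_eq_eval] using h2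
  have : f = 0 := by
    apply Polynomial.eq_zero_of_infinite_isRoot
    refine (Set.Ioo_infinite (zero_lt_one (α := ℝ))).mono ?_
    intro s hs
    simpa [Polynomial.IsRoot, hf] using h s hs.1 hs.2
  rw [← hf, this, Polynomial.eval_zero]

/-- A polynomial vanishing on an open segment is divisible by the linear form of its line.
Composing `q` with the projection onto the line along `R - P` changes `q` by a multiple of the form,
and the result vanishes identically. -/
lemma ell_dvd {P Q R : ℝ × ℝ} (hR : area P Q R ≠ 0) {q : MvPolynomial (Fin 2) ℝ}
    (h : ∀ t : ℝ, 0 < t → t < 1 → evP q (pt P Q t) = 0) : ell P Q ∣ q := by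
  let σ : MvPolynomial (Fin 2) ℝ →ₐ[ℝ] MvPolynomial (Fin 2) ℝ :=
    aeval ![X 0 - C ((R.1 - P.1) / area P Q R) * ell P Q,
      X 1 - C ((R.2 - P.2) / area P Q R) * ell P Q]
  have h1 : ell P Q ∣ q - σ q := by
    rw [← Ideal.mem_span_singleton, ← Ideal.Quotient.mk_eq_mk_iff_sub_mem]
    have : (Ideal.Quotient.mkₐ ℝ (Ideal.span {ell P Q})) =
        (Ideal.Quotient.mkₐ ℝ (Ideal.span {ell P Q})).comp σ := by
      ext i
      simp only [AlgHom.comp_apply, Ideal.Quotient.mkₐ_eq_mk]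
      rw [Ideal.Quotient.mk_eq_mk_iff_sub_mem, Ideal.mem_span_singleton]
      fin_cases i <;> simp [σ]
    exact DFunLike.congr_fun this q
  have h2 : σ q = 0 := by
    apply MvPolynomial.funext
    intro x
    have hσ : eval x (σ q) = evP q (x 0 - (R.1 - P.1) / area P Q R * area P Q (x 0, x 1),
        x 1 - (R.2 - P.2) / area P Q R * area P Q (x 0, x 1)) := by
      have : (aeval x).comp σ = (aeval ![x 0 - (R.1 - P.1) / area P Q R * area P Q (x 0, x 1),
        x 1 - (R.2 - P.2) / area P Q R * area P Q (x 0, x 1)] :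
          MvPolynomial (Fin 2) ℝ →ₐ[ℝ] ℝ) := by
        ext i
        fin_cases i <;> simp [σ, ell, area]
      have h2 := DFunLike.congr_fun this q
      simpa [evP, MvPolynomial.coe_aeval_eq_eval] using h2
    rw [hσ, map_zero]
    -- barycentric coordinate of the projected point along the edge
    convert vanish_line h (area P (x 0, x 1) R / area P Q R) using 2
    ext
    · simp only [pt]; field_simp; simp only [area]; ring
    · simp only [pt]; field_simp; simp only [area]; ring
  simpa [h2] using h1

/-! ### Degrees and affine polynomials -/

lemma totalDegree_ell {P Q R : ℝ × ℝ} (hR : area P Q R ≠ 0) : 1 ≤ (ell P Q).totalDegree := by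
  by_contra! h
  obtain h := (totalDegree_eq_zero_iff_eq_C).1 (Nat.lt_one_iff.1 h)
  have h1 := evP_ell P Q R
  have h2 := evP_ell P Q P
  rw [h] at h1 h2
  simp only [evP, eval_C] at h1 h2
  apply hR
  rw [← h1, h2]
  simp [area]

lemma ell_ne_zero {P Q R : ℝ × ℝ} (hR : area P Q R ≠ 0) : ell P Q ≠ 0 := by
  intro h
  simpa [h] using totalDegree_ell hR

lemma totalDegree_ell_le (P Q : ℝ × ℝ) : (ell P Q).totalDegree ≤ 1 := by
  have : ∀ (a b : ℝ) (i : Fin 2),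
      (C a * (X i - C b) : MvPolynomial (Fin 2) ℝ).totalDegree ≤ 1 := by
    intro a b i
    refine (totalDegree_mul _ _).trans ?_
    rw [totalDegree_C, zero_add]
    refine (totalDegree_sub_C_le _ _).trans ?_
    simp
  exact (totalDegree_sub _ _).trans (max_le (this _ _ _) (this _ _ _))

lemma totalDegree_aff_le (a b c : ℝ) : (aff a b c).totalDegree ≤ 1 := by
  have : ∀ (a : ℝ) (i : Fin 2), (C a * X i : MvPolynomial (Fin 2) ℝ).totalDegree ≤ 1 := by
    intro a i
    refine (totalDegree_mul _ _).trans ?_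
    simp
  refine (totalDegree_add _ _).trans (max_le ((totalDegree_add _ _).trans (max_le ?_ ?_)) ?_)
  · simp
  · exact this _ _
  · exact this _ _

lemma exists_aff {r : MvPolynomial (Fin 2) ℝ} (h : r.totalDegree ≤ 1) :
    ∃ a b c, r = aff a b c := by
  refine ⟨coeff 0 r, coeff (Finsupp.single 0 1) r, coeff (Finsupp.single 1 1) r, ?_⟩
  ext m
  by_cases hm : 1 < m.degree
  · rw [coeff_eq_zero_of_totalDegree_lt, coeff_eq_zero_of_totalDegree_lt]
    · exact (totalDegree_aff_le _ _ _).trans_lt hm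
    · exact h.trans_lt hm
  · have hm' : m 0 + m 1 ≤ 1 := by
      simpa [Finsupp.degree_eq_sum] using hm
    have hc : m = 0 ∨ m = Finsupp.single 0 1 ∨ m = Finsupp.single 1 1 := by
      rcases Nat.eq_zero_or_pos (m 0) with h0 | h0 <;> rcases Nat.eq_zero_or_pos (m 1) with h1 | h1
      · left; ext i; fin_cases i <;> simp [h0, h1]
      · right; right; ext i; fin_cases i <;> simp [h0]; omega
      · right; left; ext i; fin_cases i <;> simp [h1]; omega
      · omega
    have h01 : (Finsupp.single 0 1 : Fin 2 →₀ ℕ) ≠ Finsupp.single 1 1 := by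
      intro h; simpa using DFunLike.congr_fun h 0
    rcases hc with rfl | rfl | rfl
    · simp [aff]
    · simp [aff, coeff_X, coeff_C, h01.symm, eq_comm (a := (0 : Fin 2 →₀ ℕ))]
    · simp [aff, coeff_X, coeff_C, h01, eq_comm (a := (0 : Fin 2 →₀ ℕ))]

/-! ### The structure of `B(K)` -/

lemma area_pt_left (P Q R : ℝ × ℝ) (t : ℝ) : area Q R (pt P Q t) = (1 - t) * area P Q R := by
  simp only [area, pt]; ring

lemma area_pt_right (P Q R : ℝ × ℝ) (t : ℝ) : area R P (pt P Q t) = t * area P Q R := by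
  simp only [area, pt]; ring

lemma area_pt_self (P Q : ℝ × ℝ) (t : ℝ) : area P Q (pt P Q t) = 0 := by
  simp only [area, pt]; ring

lemma area_rot (P Q R : ℝ × ℝ) : area Q R P = area P Q R := by
  simp only [area]; ring

lemma area_ne_zero {A B C : ℝ × ℝ} (hK : AffineIndependent ℝ ![A, B, C]) : area A B C ≠ 0 := by
  intro h
  rw [affineIndependent_iff_not_collinear_set] at hK
  apply hK
  by_cases hAB : B = A
  · subst hAB; simpa using collinear_pair ℝ B C
  rw [collinear_iff_of_mem (p₀ := A) (by simp)]
  refine ⟨B - A, ?_⟩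
  have hne : (B.1 - A.1) ^ 2 + (B.2 - A.2) ^ 2 ≠ 0 := by
    intro h0
    apply hAB
    ext <;> nlinarith [sq_nonneg (B.1 - A.1), sq_nonneg (B.2 - A.2)]
  simp only [area] at h
  rintro p (rfl | rfl | rfl)
  · exact ⟨0, by simp⟩
  · exact ⟨1, by simp⟩
  · refine ⟨((B.1 - A.1) * (p.1 - A.1) + (B.2 - A.2) * (p.2 - A.2)) /
      ((B.1 - A.1) ^ 2 + (B.2 - A.2) ^ 2), ?_⟩
    ext
    · simp only [vadd_eq_add, Prod.fst_add, Prod.smul_fst, Prod.fst_sub, smul_eq_mul]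
      field_simp
      linear_combination -(B.2 - A.2) * h
    · simp only [vadd_eq_add, Prod.snd_add, Prod.smul_snd, Prod.snd_sub, smul_eq_mul]
      field_simp
      linear_combination (B.1 - A.1) * h

/-- The scalar bubble space: a polynomial of degree at most `4` vanishing on the boundary of the
triangle is the cubic bubble times an affine polynomial. -/
lemma bubble_of_memB {A B C : ℝ × ℝ} (hD : area A B C ≠ 0) {q : MvPolynomial (Fin 2) ℝ}
    (hdeg : q.totalDegree ≤ 4)
    (hq : ∀ p ∈ segment ℝ A B ∪ segment ℝ B C ∪ segment ℝ C A, evP q p = 0) :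
    ∃ a b c, q = bub A B C * aff a b c := by
  have hD1 : area B C A ≠ 0 := by rwa [area_rot]
  have hD2 : area C A B ≠ 0 := by rwa [area_rot, area_rot]
  obtain ⟨q1, rfl⟩ := ell_dvd (q := q) hD fun t h0 h1 =>
    hq _ (Or.inl (Or.inl (pt_mem A B h0.le h1.le)))
  obtain ⟨q2, rfl⟩ := ell_dvd (q := q1) hD1 fun t h0 h1 => by
    have := hq _ (Or.inl (Or.inr (pt_mem B C h0.le h1.le)))
    rw [evP_mul, evP_ell, area_pt_right] at this
    exact (mul_eq_zero.1 this).resolve_left (mul_ne_zero h0.ne' hD1)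
  obtain ⟨q3, rfl⟩ := ell_dvd (q := q2) hD2 fun t h0 h1 => by
    have := hq _ (Or.inr (pt_mem C A h0.le h1.le))
    rw [evP_mul, evP_mul, evP_ell, evP_ell, area_pt_left, area_pt_right] at this
    exact ((mul_eq_zero.1 ((mul_eq_zero.1 this).resolve_left
      (mul_ne_zero (sub_pos.2 h1).ne' hD2)))).resolve_left (mul_ne_zero h0.ne' hD2)
  have hr : q3.totalDegree ≤ 1 := by
    by_cases h3 : q3 = 0
    · simp [h3]
    have e1 := ell_ne_zero hD
    have e2 := ell_ne_zero hD1
    have e3 := ell_ne_zero hD2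
    rw [totalDegree_mul_of_isDomain e1 (by simp [*]), totalDegree_mul_of_isDomain e2 (by simp [*]),
      totalDegree_mul_of_isDomain e3 h3] at hdeg
    have := totalDegree_ell hD
    have := totalDegree_ell hD1
    have := totalDegree_ell hD2
    omega
  obtain ⟨a, b, c, rfl⟩ := exists_aff hr
  exact ⟨a, b, c, by simp only [bub]; ring⟩

lemma totalDegree_bub_aff (A B C : ℝ × ℝ) (a b c : ℝ) :
    (bub A B C * aff a b c).totalDegree ≤ 4 := by
  have h0 := totalDegree_mul (bub A B C) (aff a b c)
  have h1 := totalDegree_mul (ell A B) (ell B C * ell C A)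
  have h2 := totalDegree_mul (ell B C) (ell C A)
  have := totalDegree_ell_le A B
  have := totalDegree_ell_le B C
  have := totalDegree_ell_le C A
  have := totalDegree_aff_le a b c
  simp only [bub] at h0 ⊢
  omega

lemma evP_bub {A B C p : ℝ × ℝ}
    (hp : p ∈ segment ℝ A B ∪ segment ℝ B C ∪ segment ℝ C A) : evP (bub A B C) p = 0 := by
  simp only [bub, evP_mul, evP_ell]
  rcases hp with (hp | hp) | hp <;> obtain ⟨t, rfl⟩ := exists_pt hp <;> simp [area_pt_self]

lemma memB_bub (A B C : ℝ × ℝ) (a b c a' b' c' : ℝ) :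
    memB A B C (bub A B C * aff a b c, bub A B C * aff a' b' c') := by
  refine ⟨totalDegree_bub_aff .., totalDegree_bub_aff .., fun p hp => ?_⟩
  simp [evP_mul, evP_bub hp]

/-! ### Divergence-free bubble fields -/

/-- On the open edge `P Q`, the divergence of `ell P Q * g * w` reduces to `g * (∇(ell P Q) · w)`.
If it is zero and `g` has no zero there, then `∇(ell P Q) · w` vanishes at both endpoints, being
affine along the edge. -/
lemma edge_normal {P Q : ℝ × ℝ} {g : MvPolynomial (Fin 2) ℝ} {a b c a' b' c' : ℝ}
    (hg : ∀ t : ℝ, 0 < t → t < 1 → evP g (pt P Q t) ≠ 0)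
    (h : divP (ell P Q * g * aff a b c, ell P Q * g * aff a' b' c') = 0) :
    (Q.1 - P.1) * (a' + b' * P.1 + c' * P.2) - (Q.2 - P.2) * (a + b * P.1 + c * P.2) = 0 ∧
    (Q.1 - P.1) * (a' + b' * Q.1 + c' * Q.2) - (Q.2 - P.2) * (a + b * Q.1 + c * Q.2) = 0 := by
  have key : ∀ t : ℝ, 0 < t → t < 1 →
      (Q.1 - P.1) * (a' + b' * (pt P Q t).1 + c' * (pt P Q t).2)
        - (Q.2 - P.2) * (a + b * (pt P Q t).1 + c * (pt P Q t).2) = 0 := by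
    intro t h0 h1
    have h2 := congrArg (fun f => evP f (pt P Q t)) h
    have hl : evP (ell P Q) (pt P Q t) = 0 := by rw [evP_ell, area_pt_self]
    have ha := evP_aff a b c (pt P Q t)
    have ha' := evP_aff a' b' c' (pt P Q t)
    have hx : pderiv 0 (ell P Q) = C (-(Q.2 - P.2)) := by
      simp [ell, pderiv_X]
    have hy : pderiv 1 (ell P Q) = C (Q.1 - P.1) := by
      simp [ell, pderiv_X]
    simp only [divP, Derivation.leibniz, smul_eq_mul, hx, hy] at h2
    simp only [evP, map_add, map_mul, eval_C, map_zero] at h2 hl ha ha'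
    rw [hl, ha, ha'] at h2
    refine (mul_eq_zero.1 ?_).resolve_left (hg t h0 h1)
    simp only [evP]
    linear_combination h2
  have k1 := key (1 / 3) (by norm_num) (by norm_num)
  have k2 := key (2 / 3) (by norm_num) (by norm_num)
  simp only [pt] at k1 k2
  exact ⟨by linear_combination 2 * k1 - k2, by linear_combination 2 * k2 - k1⟩

lemma aff_eq_zero {A B C : ℝ × ℝ} (hD : area A B C ≠ 0) {a b c : ℝ}
    (hA : a + b * A.1 + c * A.2 = 0) (hB : a + b * B.1 + c * B.2 = 0)
    (hC : a + b * C.1 + c * C.2 = 0) : a = 0 ∧ b = 0 ∧ c = 0 := by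
  have hb : b = 0 := by
    refine (mul_eq_zero.1 ?_).resolve_left hD
    simp only [area]
    linear_combination (C.2 - A.2) * (hB - hA) - (B.2 - A.2) * (hC - hA)
  have hc : c = 0 := by
    refine (mul_eq_zero.1 ?_).resolve_left hD
    simp only [area]
    linear_combination (B.1 - A.1) * (hC - hA) - (C.1 - A.1) * (hB - hA)
  subst hb hc
  simpa using hA

/-- At the vertex `A` the normals of the edges `A B` and `C A` are independent. -/
lemma normals_indep {A B C : ℝ × ℝ} (hD : area A B C ≠ 0) {u u' : ℝ}
    (h1 : (B.1 - A.1) * u' - (B.2 - A.2) * u = 0)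
    (h2 : (A.1 - C.1) * u' - (A.2 - C.2) * u = 0) : u = 0 ∧ u' = 0 := by
  constructor <;> refine (mul_eq_zero.1 ?_).resolve_left hD <;> simp only [area]
  · linear_combination (C.1 - A.1) * h1 + (B.1 - A.1) * h2
  · linear_combination (C.2 - A.2) * h1 + (B.2 - A.2) * h2

/-- The divergence is injective on bubble fields, in coordinates. -/
lemma core {A B C : ℝ × ℝ} (hD : area A B C ≠ 0) {a b c a' b' c' : ℝ}
    (h : divP (bub A B C * aff a b c, bub A B C * aff a' b' c') = 0) :
    (a = 0 ∧ b = 0 ∧ c = 0) ∧ (a' = 0 ∧ b' = 0 ∧ c' = 0) := by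
  have hD1 : area B C A ≠ 0 := by rwa [area_rot]
  have hD2 : area C A B ≠ 0 := by rwa [area_rot, area_rot]
  have hg : ∀ {P Q R : ℝ × ℝ}, area P Q R ≠ 0 → ∀ t : ℝ, 0 < t → t < 1 →
      evP (ell Q R * ell R P) (pt P Q t) ≠ 0 := by
    intro P Q R hR t h0 h1
    rw [evP_mul, evP_ell, evP_ell, area_pt_left, area_pt_right]
    exact mul_ne_zero (mul_ne_zero (sub_pos.2 h1).ne' hR) (mul_ne_zero h0.ne' hR)
  have b1 : bub A B C = ell B C * (ell C A * ell A B) := by simp only [bub]; ring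
  have b2 : bub A B C = ell C A * (ell A B * ell B C) := by simp only [bub]; ring
  obtain ⟨nA, nB⟩ := edge_normal (hg hD) h
  obtain ⟨mB, mC⟩ := edge_normal (hg hD1) (b1 ▸ h)
  obtain ⟨kC, kA⟩ := edge_normal (hg hD2) (b2 ▸ h)
  obtain ⟨A1, A2⟩ := normals_indep hD nA kA
  obtain ⟨B1, B2⟩ := normals_indep hD1 mB nB
  obtain ⟨C1, C2⟩ := normals_indep hD2 kC mC
  exact ⟨aff_eq_zero hD A1 B1 C1, aff_eq_zero hD A2 B2 C2⟩

/-! ### The basis and its divergences -/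

/-- The divergence as a linear map. -/
noncomputable def divL : MvPolynomial (Fin 2) ℝ × MvPolynomial (Fin 2) ℝ →ₗ[ℝ]
    MvPolynomial (Fin 2) ℝ :=
  (pderiv 0).toLinearMap ∘ₗ LinearMap.fst .. + (pderiv 1).toLinearMap ∘ₗ LinearMap.snd ..

lemma divL_apply (v : MvPolynomial (Fin 2) ℝ × MvPolynomial (Fin 2) ℝ) : divL v = divP v := rfl

/-- The basis of `B(K)`: the bubble times `1`, `x`, `y` in each component. -/
noncomputable def bas (A B C : ℝ × ℝ) :
    Fin 6 → MvPolynomial (Fin 2) ℝ × MvPolynomial (Fin 2) ℝ :=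
  ![(bub A B C * aff 1 0 0, bub A B C * aff 0 0 0), (bub A B C * aff 0 1 0, bub A B C * aff 0 0 0),
    (bub A B C * aff 0 0 1, bub A B C * aff 0 0 0), (bub A B C * aff 0 0 0, bub A B C * aff 1 0 0),
    (bub A B C * aff 0 0 0, bub A B C * aff 0 1 0), (bub A B C * aff 0 0 0, bub A B C * aff 0 0 1)]

lemma sum_bas (A B C : ℝ × ℝ) (d : Fin 6 → ℝ) :
    ∑ j, d j • bas A B C j =
      (bub A B C * aff (d 0) (d 1) (d 2), bub A B C * aff (d 3) (d 4) (d 5)) := by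
  simp only [Fin.sum_univ_six, bas]
  ext1 <;> simp [aff, smul_eq_C_mul] <;> ring

/-- The divergence map div : B(K) → P³ is injective and its image has
    dimension 6, equal to dim B(K). -/
theorem stmt10 (A B C : ℝ × ℝ) (hK : AffineIndependent ℝ ![A, B, C]) :
    -- injectivity of div on B(K)
    (∀ v w : MvPolynomial (Fin 2) ℝ × MvPolynomial (Fin 2) ℝ,
      memB A B C v → memB A B C w → divP v = divP w → v = w) ∧
    -- dim B(K) = 6 and dim (div B(K)) = 6
    (∃ b : Fin 6 → MvPolynomial (Fin 2) ℝ × MvPolynomial (Fin 2) ℝ,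
      (∀ j, memB A B C (b j)) ∧ LinearIndependent ℝ b ∧
      (∀ v, memB A B C v → ∃ d : Fin 6 → ℝ, v = ∑ j, d j • b j) ∧
      LinearIndependent ℝ (fun j => divP (b j)) ∧
      (∀ v, memB A B C v → ∃ d : Fin 6 → ℝ, divP v = ∑ j, d j • divP (b j))) := by
  have hD := area_ne_zero hK
  have hspan : ∀ v, memB A B C v → ∃ d : Fin 6 → ℝ, v = ∑ j, d j • bas A B C j := by
    rintro ⟨v1, v2⟩ ⟨h1, h2, h3⟩
    obtain ⟨a, b, c, rfl⟩ := bubble_of_memB hD h1 fun p hp => (h3 p hp).1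
    obtain ⟨a', b', c', rfl⟩ := bubble_of_memB hD h2 fun p hp => (h3 p hp).2
    exact ⟨![a, b, c, a', b', c'], by rw [sum_bas]; rfl⟩
  have hdiv : ∀ d : Fin 6 → ℝ,
      divP (∑ j, d j • bas A B C j) = ∑ j, d j • divP (bas A B C j) := by
    intro d
    simp only [← divL_apply, map_sum, map_smul]
  have hinj : ∀ d : Fin 6 → ℝ, ∑ j, d j • divP (bas A B C j) = 0 → ∀ j, d j = 0 := by
    intro d hd
    rw [← hdiv, sum_bas] at hd
    obtain ⟨⟨h0, h1, h2⟩, h3, h4, h5⟩ := core hD hd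
    intro j
    fin_cases j <;> assumption
  have hli : LinearIndependent ℝ (fun j => divP (bas A B C j)) :=
    Fintype.linearIndependent_iff.2 hinj
  refine ⟨?_, bas A B C, ?_, LinearIndependent.of_comp divL hli, hspan, hli, ?_⟩
  · intro v w hv hw h
    obtain ⟨d, rfl⟩ := hspan v hv
    obtain ⟨e, rfl⟩ := hspan w hw
    have : ∀ j, (d - e) j = 0 := by
      apply hinj
      simp only [Pi.sub_apply, sub_smul, Finset.sum_sub_distrib, ← hdiv, h, sub_self]
    refine Finset.sum_congr rfl fun j _ => ?_
    rw [sub_eq_zero.1 (this j)]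
  · intro j
    fin_cases j <;> exact memB_bub ..
  · intro v hv
    obtain ⟨d, rfl⟩ := hspan v hv
    exact ⟨d, hdiv d⟩
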